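/- Progress: In the calculus λ^test_trust, for any closed typed term t : T, either there exists a term t' and a probability p such that t ↦_p t' according to the call-by-name reduction strategy, or t is a value. -/

import Mathlib

open scoped Classical

/-- Types of the calculus λ^test_trust. -/
inductive Ty : Type where
  | atom : ℕ → Ty
  | arrow : Ty → Ty → Ty
  | sum : List Ty → Ty
  | tuple : Ty → ℕ → Ty
  | bool : List (ℚ × Ty) → ℚ → Ty

/-- Subtyping relation extending a relation `S` on atomic types.
    The convention identifying a one-summand sum with its summand is included. -/
inductive SubTy (S : ℕ → ℕ → Prop) : Ty → Ty → Prop where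
  | refl (A) : SubTy S A A
  | trans {A B C} : SubTy S A B → SubTy S B C → SubTy S A C
  | atom {a b} : S a b → SubTy S (.atom a) (.atom b)
  | arrow {A1 A2 B1 B2} : SubTy S B1 A1 → SubTy S A2 B2 →
      SubTy S (.arrow A1 A2) (.arrow B1 B2)
  | sum {As Bs : List Ty} (g : Fin As.length → Ty) :
      (∀ i, g i ∈ Bs) → (∀ i, SubTy S (As.get i) (g i)) →
      SubTy S (.sum As) (.sum Bs)
  | tuple {A B m n} : SubTy S A B → n ≤ m → SubTy S (.tuple A m) (.tuple B n)
  | sumSingle (A) : SubTy S (.sum [A]) A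
  | singleSum (A) : SubTy S A (.sum [A])

/-- Terms of the calculus λ^test_trust. -/
inductive Tm : Type where
  | tt : Tm
  | ff : Tm
  | var : ℕ → Tm
  | lam : ℕ → Ty → Tm → Tm
  | app : Tm → Tm → Tm
  | choice : List ℚ → List Tm → Tm
  | exp : ℕ → Tm → Tm
  | tup : List Tm → Tm
  | proj : Tm → ℕ → Tm
  | trust : Tm → List (ℚ × Ty) → ℚ → Tm

mutual
/-- Substitution `t[s/x]`. -/
def subst (x : ℕ) (s : Tm) : Tm → Tm
  | .tt => .tt
  | .ff => .ff
  | .var y => if y = x then s else .var y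
  | .lam y A t => if y = x then .lam y A t else .lam y A (subst x s t)
  | .app t u => .app (subst x s t) (subst x s u)
  | .choice qs ts => .choice qs (substList x s ts)
  | .exp n t => .exp n (subst x s t)
  | .tup ts => .tup (substList x s ts)
  | .proj t j => .proj (subst x s t) j
  | .trust t P e => .trust (subst x s t) P e

def substList (x : ℕ) (s : Tm) : List Tm → List Tm
  | [] => []
  | t :: ts => subst x s t :: substList x s ts
end

/-- Typing judgement of λ^test_trust, relative to an atomic subtyping relation `S`
    and an assignment `env` of types to variables. -/
inductive HasTy (S : ℕ → ℕ → Prop) : (ℕ → Ty) → Tm → Ty → Prop where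
  | tt {env P e} : HasTy S env .tt (.bool P e)
  | ff {env P e} : HasTy S env .ff (.bool P e)
  | var {env x} : HasTy S env (.var x) (env x)
  | lam {env x A t B} : HasTy S (Function.update env x A) t B →
      HasTy S env (.lam x A t) (.arrow A B)
  | app {env f u A B C} : HasTy S env f (.arrow A B) → HasTy S env u C →
      SubTy S C A → HasTy S env (.app f u) B
  | appChoice {env f u C} {As : List (Ty × Ty)} :
      HasTy S env f (.sum (As.map (fun p => Ty.arrow p.1 p.2))) →
      HasTy S env u C → (∀ p ∈ As, SubTy S C p.1) → As ≠ [] →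
      HasTy S env (.app f u) (.sum (As.map Prod.snd))
  | choice {env qs ts} {As : List Ty} : qs.length = ts.length → ts ≠ [] → qs.sum = 1 →
      ts.length = As.length →
      (∀ i (h1 : i < ts.length) (h2 : i < As.length),
        HasTy S env (ts.get ⟨i, h1⟩) (As.get ⟨i, h2⟩)) →
      (∃ A, ∀ B ∈ As, SubTy S B A) →
      HasTy S env (.choice qs ts) (.sum As)
  | exp {env n t A} : 1 ≤ n → HasTy S env t A →
      HasTy S env (.exp n t) (.tuple A n)
  | tup {env ts E} {Es : List Ty} : ts ≠ [] → ts.length = Es.length →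
      (∀ i (h1 : i < ts.length) (h2 : i < Es.length),
        HasTy S env (ts.get ⟨i, h1⟩) (Es.get ⟨i, h2⟩)) →
      (∀ E' ∈ Es, SubTy S E' E) → HasTy S env (.tup ts) (.tuple E ts.length)
  | proj {env t A n j} : HasTy S env t (.tuple A n) → 1 ≤ j → j ≤ n →
      HasTy S env (.proj t j) A
  | trust {env t A n P e} : HasTy S env t (.tuple A n) →
      HasTy S env (.trust t P e) (.bool P e)

/-- Values of λ^test_trust. -/
inductive IsValue : Tm → Prop where
  | tt : IsValue .tt
  | ff : IsValue .ff
  | lam {x A t} : IsValue (.lam x A t)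
  | tup {ts} : (∀ u ∈ ts, IsValue u) → IsValue (.tup ts)

/-- `ClosedU V t`: all free variables of `t` are in `V`. -/
inductive ClosedU : List ℕ → Tm → Prop where
  | tt {V} : ClosedU V .tt
  | ff {V} : ClosedU V .ff
  | var {V x} : x ∈ V → ClosedU V (.var x)
  | lam {V x A t} : ClosedU (x :: V) t → ClosedU V (.lam x A t)
  | app {V t u} : ClosedU V t → ClosedU V u → ClosedU V (.app t u)
  | choice {V qs ts} : (∀ t ∈ ts, ClosedU V t) → ClosedU V (.choice qs ts)
  | exp {V n t} : ClosedU V t → ClosedU V (.exp n t)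
  | tup {V ts} : (∀ t ∈ ts, ClosedU V t) → ClosedU V (.tup ts)
  | proj {V t j} : ClosedU V t → ClosedU V (.proj t j)
  | trust {V t P e} : ClosedU V t → ClosedU V (.trust t P e)

/-- `t` is a closed term. -/
def Closed (t : Tm) : Prop := ClosedU [] t

/-- The frequency distribution encoded by the list of types `Ss` is within
    total-variation distance `ε` of the probability distribution `P` over types. -/
def FreqClose (S : ℕ → ℕ → Prop) (Ss : List Ty) (P : List (ℚ × Ty)) (ε : ℚ) : Prop :=
  (∀ qB ∈ P,
      |((Ss.countP (fun T => decide (SubTy S T qB.2)) : ℚ) / (Ss.length : ℚ)) - qB.1| ≤ ε) ∧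
  (∀ T ∈ Ss, ∃ qB ∈ P, SubTy S T qB.2)

/-- The tuple of values `ss` passes the trustworthiness check against `P` with threshold `ε`. -/
def TrustCond (S : ℕ → ℕ → Prop) (env : ℕ → Ty) (ss : List Tm)
    (P : List (ℚ × Ty)) (ε : ℚ) : Prop :=
  ∃ Ss : List Ty, List.Forall₂ (HasTy S env) ss Ss ∧ FreqClose S Ss P ε

/-- Base reduction rules `t ↦ᵢ_p t'` of λ^test_trust; the natural number `i`
    records which rule instance is used (the index of the chosen branch for a
    probabilistic choice, `0` otherwise), and `p` is the probability label. -/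
inductive Step (S : ℕ → ℕ → Prop) (env : ℕ → Ty) : Tm → ℕ → ℚ → Tm → Prop where
  | beta {x A t u} : Step S env (.app (.lam x A t) u) 0 1 (subst x u t)
  | choice {qs ts} {i : ℕ} (h1 : i < qs.length) (h2 : i < ts.length) :
      Step S env (.choice qs ts) i (qs.get ⟨i, h1⟩) (ts.get ⟨i, h2⟩)
  | exp {n t} : Step S env (.exp n t) 0 1 (.tup (List.replicate n t))
  | proj {ts : List Tm} {j : ℕ} (hj : 1 ≤ j) (h : j - 1 < ts.length) :
      Step S env (.proj (.tup ts) j) 0 1 (ts.get ⟨j - 1, h⟩)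
  | trustT {ts P e} : (∀ u ∈ ts, IsValue u) → TrustCond S env ts P e →
      Step S env (.trust (.tup ts) P e) 0 1 .tt
  | trustF {ts P e} : (∀ u ∈ ts, IsValue u) → ¬ TrustCond S env ts P e →
      Step S env (.trust (.tup ts) P e) 0 1 .ff

/-- The call-by-name reduction strategy of λ^test_trust. -/
inductive CBN (S : ℕ → ℕ → Prop) (env : ℕ → Ty) : Tm → ℕ → ℚ → Tm → Prop where
  | base {t i p t'} : Step S env t i p t' → CBN S env t i p t'
  | appL {t i p t' u} : CBN S env t i p t' → CBN S env (.app t u) i p (.app t' u)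
  | tup {pre post : List Tm} {t i p t'} : (∀ u ∈ pre, IsValue u) → ¬ IsValue t →
      CBN S env t i p t' →
      CBN S env (.tup (pre ++ t :: post)) i p (.tup (pre ++ t' :: post))
  | trust {t i p t' P e} : CBN S env t i p t' →
      CBN S env (.trust t P e) i p (.trust t' P e)
  | proj {t i p t' j} : (∀ ts, t ≠ .tup ts) → CBN S env t i p t' →
      CBN S env (.proj t j) i p (.proj t' j)

/-- Redexes of λ^test_trust. -/
inductive IsRedex : Tm → Prop where
  | beta {x A t u} : IsRedex (.app (.lam x A t) u)
  | choice {qs ts} : IsRedex (.choice qs ts)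
  | exp {n t} : IsRedex (.exp n t)
  | proj {ts : List Tm} {j : ℕ} : 1 ≤ j → j ≤ ts.length → IsRedex (.proj (.tup ts) j)
  | trust {ts P e} : (∀ u ∈ ts, IsValue u) → IsRedex (.trust (.tup ts) P e)

/-- `t` contains a redex (as a subterm). -/
inductive HasRedex : Tm → Prop where
  | here {t} : IsRedex t → HasRedex t
  | lam {x A t} : HasRedex t → HasRedex (.lam x A t)
  | appL {t u} : HasRedex t → HasRedex (.app t u)
  | appR {t u} : HasRedex u → HasRedex (.app t u)
  | choice {qs ts t} : t ∈ ts → HasRedex t → HasRedex (.choice qs ts)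
  | exp {n t} : HasRedex t → HasRedex (.exp n t)
  | tup {ts t} : t ∈ ts → HasRedex t → HasRedex (.tup ts)
  | proj {t j} : HasRedex t → HasRedex (.proj t j)
  | trust {t P e} : HasRedex t → HasRedex (.trust t P e)

/-- Full (unrestricted) one-step reduction: a base reduction applied in an
    arbitrary position. -/
inductive Full (S : ℕ → ℕ → Prop) (env : ℕ → Ty) : Tm → Tm → Prop where
  | base {t t' i p} : Step S env t i p t' → Full S env t t'
  | lam {x A t t'} : Full S env t t' → Full S env (.lam x A t) (.lam x A t')
  | appL {t t' u} : Full S env t t' → Full S env (.app t u) (.app t' u)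
  | appR {t u u'} : Full S env u u' → Full S env (.app t u) (.app t u')
  | choice {qs pre post t t'} : Full S env t t' →
      Full S env (.choice qs (pre ++ t :: post)) (.choice qs (pre ++ t' :: post))
  | exp {n t t'} : Full S env t t' → Full S env (.exp n t) (.exp n t')
  | tup {pre post t t'} : Full S env t t' →
      Full S env (.tup (pre ++ t :: post)) (.tup (pre ++ t' :: post))
  | proj {t t' j} : Full S env t t' → Full S env (.proj t j) (.proj t' j)
  | trust {t t' P e} : Full S env t t' → Full S env (.trust t P e) (.trust t' P e)

/-!
The proof is by induction on the typing derivation. Call-by-name evaluates the function of an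
application, the argument of `Trust?`, the leftmost non-value of a tuple, and the argument of a
projection unless that argument is already a tuple. By the induction hypothesis that subterm either
reduces, and then so does the whole term, or is a value. Since typing has no subsumption rule, the
type of a value dictates its shape: a value of arrow type is an abstraction and a value of tuple
type is a tuple, so a redex appears, while a sum type has no values at all, so a function whose type
is a sum of arrow types must reduce.
-/

theorem exists_eq_append_cons_of_not_forall {α : Type*} {p : α → Prop} {l : List α}
    (h : ¬ ∀ a ∈ l, p a) :
    ∃ pre a post, l = pre ++ a :: post ∧ (∀ b ∈ pre, p b) ∧ ¬ p a := by
  have hfind : (l.find? fun a => ¬ p a).isSome := by simpa using h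
  obtain ⟨a, ha⟩ := Option.isSome_iff_exists.1 hfind
  obtain ⟨hpa, pre, post, hl, hpre⟩ := List.find?_eq_some_iff_append.1 ha
  exact ⟨pre, a, post, hl, by simpa using hpre, by simpa using hpa⟩

section CanonicalForms

variable {S : ℕ → ℕ → Prop} {env : ℕ → Ty} {v : Tm} {A B : Ty} {n : ℕ}

theorem IsValue.exists_eq_lam_of_hasTy_arrow (hv : IsValue v) (h : HasTy S env v (.arrow A B)) :
    ∃ x t, v = .lam x A t := by
  cases hv <;> cases h
  exact ⟨_, _, rfl⟩

theorem IsValue.exists_eq_tup_of_hasTy_tuple (hv : IsValue v) (h : HasTy S env v (.tuple A n)) :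
    ∃ ts, v = .tup ts ∧ ∀ u ∈ ts, IsValue u := by
  cases hv <;> cases h
  exact ⟨_, rfl, ‹_›⟩

theorem IsValue.not_hasTy_sum {As : List Ty} (hv : IsValue v) : ¬ HasTy S env v (.sum As) := by
  intro h
  cases hv <;> cases h

theorem HasTy.length_eq_of_tup {ts : List Tm} (h : HasTy S env (.tup ts) (.tuple A n)) :
    ts.length = n := by
  cases h
  rfl

end CanonicalForms

section Closed

theorem not_closed_var (x : ℕ) : ¬ Closed (.var x)
  | .var hx => List.not_mem_nil hx

theorem Closed.of_app_left {f u : Tm} : Closed (.app f u) → Closed f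
  | .app hf _ => hf

theorem Closed.of_mem_tup {ts : List Tm} {t : Tm} (ht : t ∈ ts) : Closed (.tup ts) → Closed t
  | .tup hts => hts t ht

theorem Closed.of_proj {t : Tm} {j : ℕ} : Closed (.proj t j) → Closed t
  | .proj ht => ht

theorem Closed.of_trust {t : Tm} {P : List (ℚ × Ty)} {e : ℚ} : Closed (.trust t P e) → Closed t
  | .trust ht => ht

end Closed

/-- A term is call-by-name reducible if it makes some call-by-name step, whatever the rule
instance and the probability label. -/
def CBNReducible (S : ℕ → ℕ → Prop) (env : ℕ → Ty) (t : Tm) : Prop :=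
  ∃ i p t', CBN S env t i p t'

section Reducibility

variable {S : ℕ → ℕ → Prop} {env : ℕ → Ty} {f t u : Tm} {ts : List Tm} {A B : Ty} {n j : ℕ}
  {P : List (ℚ × Ty)} {e : ℚ}

theorem Step.cbnReducible {i : ℕ} {p : ℚ} (h : Step S env t i p u) : CBNReducible S env t :=
  ⟨i, p, u, .base h⟩

theorem CBNReducible.app : CBNReducible S env f → CBNReducible S env (.app f u)
  | ⟨i, p, _, h⟩ => ⟨i, p, _, .appL h⟩

theorem CBNReducible.proj (ht : ∀ ts, t ≠ .tup ts) :
    CBNReducible S env t → CBNReducible S env (.proj t j)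
  | ⟨i, p, _, h⟩ => ⟨i, p, _, .proj ht h⟩

theorem CBNReducible.trust : CBNReducible S env t → CBNReducible S env (.trust t P e)
  | ⟨i, p, _, h⟩ => ⟨i, p, _, .trust h⟩

theorem cbnReducible_choice {qs : List ℚ} (hlen : qs.length = ts.length) (hts : ts ≠ []) :
    CBNReducible S env (.choice qs ts) :=
  have hpos : 0 < ts.length := List.length_pos_iff.2 hts
  (Step.choice (hlen ▸ hpos) hpos).cbnReducible

theorem cbnReducible_trust_tup (hts : ∀ u ∈ ts, IsValue u) :
    CBNReducible S env (.trust (.tup ts) P e) := by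
  by_cases hP : TrustCond S env ts P e
  · exact (Step.trustT hts hP).cbnReducible
  · exact (Step.trustF hts hP).cbnReducible

theorem HasTy.cbnReducible_app (hf : HasTy S env f (.arrow A B))
    (h : CBNReducible S env f ∨ IsValue f) : CBNReducible S env (.app f u) := by
  rcases h with hred | hval
  · exact hred.app
  · obtain ⟨x, t, rfl⟩ := hval.exists_eq_lam_of_hasTy_arrow hf
    exact Step.beta.cbnReducible

theorem HasTy.cbnReducible_app_of_sum {As : List Ty} (hf : HasTy S env f (.sum As))
    (h : CBNReducible S env f ∨ IsValue f) : CBNReducible S env (.app f u) :=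
  (h.resolve_right fun hval => hval.not_hasTy_sum hf).app

theorem HasTy.cbnReducible_proj (ht : HasTy S env t (.tuple A n)) (hj : 1 ≤ j) (hjn : j ≤ n)
    (h : CBNReducible S env t ∨ IsValue t) : CBNReducible S env (.proj t j) := by
  by_cases htup : ∃ ts, t = .tup ts
  · obtain ⟨ts, rfl⟩ := htup
    have hlen : ts.length = n := ht.length_eq_of_tup
    exact (Step.proj hj (by omega)).cbnReducible
  · refine (h.resolve_right fun hval => htup ?_).proj (not_exists.1 htup)
    exact (hval.exists_eq_tup_of_hasTy_tuple ht).imp fun _ => And.left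

theorem HasTy.cbnReducible_trust (ht : HasTy S env t (.tuple A n))
    (h : CBNReducible S env t ∨ IsValue t) : CBNReducible S env (.trust t P e) := by
  rcases h with hred | hval
  · exact hred.trust
  · obtain ⟨ts, rfl, hts⟩ := hval.exists_eq_tup_of_hasTy_tuple ht
    exact cbnReducible_trust_tup hts

theorem cbnReducible_or_isValue_tup (h : ∀ t ∈ ts, CBNReducible S env t ∨ IsValue t) :
    CBNReducible S env (.tup ts) ∨ IsValue (.tup ts) := by
  by_cases hts : ∀ u ∈ ts, IsValue u
  · exact .inr (.tup hts)
  · obtain ⟨pre, t, post, rfl, hpre, ht⟩ := exists_eq_append_cons_of_not_forall hts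
    obtain ⟨i, p, t', hstep⟩ := (h t (by simp)).resolve_right ht
    exact .inl ⟨i, p, _, .tup hpre ht hstep⟩

end Reducibility

/-- **Progress** (λ^test_trust): any closed typed term `t : T` either makes a
    call-by-name reduction step `t ↦_p t'`, or is a value. -/
theorem progress (S : ℕ → ℕ → Prop) (env : ℕ → Ty)
    (t : Tm) (T : Ty) (ht : HasTy S env t T) (hc : Closed t) :
    (∃ i p t', CBN S env t i p t') ∨ IsValue t := by
  change CBNReducible S env t ∨ IsValue t
  induction ht with
  | tt => exact .inr .tt
  | ff => exact .inr .ff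
  | var => exact absurd hc (not_closed_var _)
  | lam => exact .inr .lam
  | app hf _ _ ihf => exact .inl (hf.cbnReducible_app (ihf hc.of_app_left))
  | appChoice hf _ _ _ ihf => exact .inl (hf.cbnReducible_app_of_sum (ihf hc.of_app_left))
  | choice hlen hts => exact .inl (cbnReducible_choice hlen hts)
  | exp => exact .inl Step.exp.cbnReducible
  | tup _ hlen _ _ ih =>
    refine cbnReducible_or_isValue_tup fun t ht => ?_
    obtain ⟨i, rfl⟩ := List.get_of_mem ht
    exact ih i i.isLt (hlen ▸ i.isLt) (hc.of_mem_tup ht)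
  | proj ht hj hjn ih => exact .inl (ht.cbnReducible_proj hj hjn (ih hc.of_proj))
  | trust ht ih => exact .inl (ht.cbnReducible_trust (ih hc.of_trust))
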